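/- The nonterminating linear process OMEGA_! is not a soft process: for OMEGA_! = νa.((DELTA_! (!⋆)) | a⟨!DELTA_!⟩.0) with DELTA_! = λ!y.(a(!x).((x (!⋆)) | a⟨!x⟩.0)), there is no context Γ such that the SHOπ well-formation judgement Γ ⊩ OMEGA_! is derivable. -/

import Mathlib

/-! In `DELTA_!` the variable `x` of the input occurs at depth 0, as the function of `x (!⋆)`,
and at depth 1, in the message `!x`. A variable used at depth 0 needs the marker `x` or `§x`,
and inside a `!`-box only variables marked `!x` outside it are available. The input binder can
only mark its variable `!x` or `§x`: the marker `!x` fails on the first occurrence and the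
marker `§x` on the second, so `DELTA_!`, hence `OMEGA_!`, is not well formed in any context. -/

/-! Syntax of LHOπ / SHOπ processes and values (variables in de Bruijn style,
channels as names). -/

mutual
inductive Val : Type
  | star : Val
  | var : ℕ → Val
  | lam : Proc → Val
  | blam : Proc → Val
  | bang : Val → Val
inductive Proc : Type
  | nil : Proc
  | par : Proc → Proc → Proc
  | inp : ℕ → Proc → Proc
  | binp : ℕ → Proc → Proc
  | out : ℕ → Val → Proc → Proc
  | nu : ℕ → Proc → Proc
  | app : Val → Val → Proc
end

/-! Lifting and capture-avoiding substitution. -/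

mutual
def liftV (c : ℕ) : Val → Val
  | .star => .star
  | .var x => if x < c then .var x else .var (x + 1)
  | .lam P => .lam (liftP (c + 1) P)
  | .blam P => .blam (liftP (c + 1) P)
  | .bang V => .bang (liftV c V)
def liftP (c : ℕ) : Proc → Proc
  | .nil => .nil
  | .par P Q => .par (liftP c P) (liftP c Q)
  | .inp a P => .inp a (liftP (c + 1) P)
  | .binp a P => .binp a (liftP (c + 1) P)
  | .out a V P => .out a (liftV c V) (liftP c P)
  | .nu a P => .nu a (liftP c P)
  | .app V W => .app (liftV c V) (liftV c W)
end

mutual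
def substV (U : Val) (k : ℕ) : Val → Val
  | .star => .star
  | .var x => if x = k then U else if x < k then .var x else .var (x - 1)
  | .lam P => .lam (substP (liftV 0 U) (k + 1) P)
  | .blam P => .blam (substP (liftV 0 U) (k + 1) P)
  | .bang V => .bang (substV U k V)
def substP (U : Val) (k : ℕ) : Proc → Proc
  | .nil => .nil
  | .par P Q => .par (substP U k P) (substP U k Q)
  | .inp a P => .inp a (substP (liftV 0 U) (k + 1) P)
  | .binp a P => .binp a (substP (liftV 0 U) (k + 1) P)
  | .out a V P => .out a (substV U k V) (substP U k P)
  | .nu a P => .nu a (substP U k P)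
  | .app V W => .app (substV U k V) (substV U k W)
end

/-! Free channels and channel renaming (for α-conversion of restrictions). -/

mutual
def fcV : Val → Finset ℕ
  | .star => ∅
  | .var _ => ∅
  | .lam P => fcP P
  | .blam P => fcP P
  | .bang V => fcV V
def fcP : Proc → Finset ℕ
  | .nil => ∅
  | .par P Q => fcP P ∪ fcP Q
  | .inp a P => insert a (fcP P)
  | .binp a P => insert a (fcP P)
  | .out a V P => insert a (fcV V ∪ fcP P)
  | .nu a P => fcP P \ {a}
  | .app V W => fcV V ∪ fcV W
end

mutual
def chV (a b : ℕ) : Val → Val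
  | .star => .star
  | .var x => .var x
  | .lam P => .lam (chP a b P)
  | .blam P => .blam (chP a b P)
  | .bang V => .bang (chV a b V)
def chP (a b : ℕ) : Proc → Proc
  | .nil => .nil
  | .par P Q => .par (chP a b P) (chP a b Q)
  | .inp c P => .inp (if c = a then b else c) (chP a b P)
  | .binp c P => .binp (if c = a then b else c) (chP a b P)
  | .out c V P => .out (if c = a then b else c) (chV a b V) (chP a b P)
  | .nu c P => if c = a then .nu c P else .nu c (chP a b P)
  | .app V W => .app (chV a b V) (chV a b W)
end

/-! Structural congruence: the smallest congruence containing α-equivalence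
(for channel restrictions; α-equivalence of variables is syntactic identity in
de Bruijn style), associativity and commutativity of parallel composition,
exchange of restrictions, and scope extrusion.  No garbage-collection laws. -/

mutual
inductive SCV : Val → Val → Prop
  | refl (V) : SCV V V
  | symm : SCV V W → SCV W V
  | trans : SCV U V → SCV V W → SCV U W
  | lam : SCP P Q → SCV (.lam P) (.lam Q)
  | blam : SCP P Q → SCV (.blam P) (.blam Q)
  | bang : SCV V W → SCV (.bang V) (.bang W)
inductive SCP : Proc → Proc → Prop
  | refl (P) : SCP P P
  | symm : SCP P Q → SCP Q P
  | trans : SCP P Q → SCP Q R → SCP P R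
  | par : SCP P P' → SCP Q Q' → SCP (.par P Q) (.par P' Q')
  | inp : SCP P Q → SCP (.inp a P) (.inp a Q)
  | binp : SCP P Q → SCP (.binp a P) (.binp a Q)
  | out : SCV V W → SCP P Q → SCP (.out a V P) (.out a W Q)
  | nu : SCP P Q → SCP (.nu a P) (.nu a Q)
  | app : SCV V V' → SCV W W' → SCP (.app V W) (.app V' W')
  | assoc : SCP (.par P (.par Q R)) (.par (.par P Q) R)
  | comm : SCP (.par P Q) (.par Q P)
  | nuswap : SCP (.nu a (.nu b P)) (.nu b (.nu a P))
  | extrude : a ∉ fcP Q → SCP (.nu a (.par P Q)) (.par (.nu a P) Q)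
  | alpha : b ∉ fcP P → SCP (.nu a P) (.nu b (chP a b P))
end

/-! Reduction. -/

inductive Red : Proc → Proc → Prop
  | comm : Red (.par (.out a V P) (.inp a Q)) (.par P (substP V 0 Q))
  | bcomm : Red (.par (.out a (.bang V) P) (.binp a Q)) (.par P (substP V 0 Q))
  | beta : Red (.app (.lam P) V) (substP V 0 P)
  | bbeta : Red (.app (.blam P) (.bang V)) (substP V 0 P)
  | parL : Red P Q → Red (.par P R) (.par Q R)
  | res : Red P Q → Red (.nu a P) (.nu a Q)
  | struct : SCP P P' → Red P' Q' → SCP Q' Q → Red P Q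

/-- `m`-step reduction. -/
inductive RedN : ℕ → Proc → Proc → Prop
  | zero : RedN 0 P P
  | succ : Red P Q → RedN n Q R → RedN (n + 1) P R

/-! SHOπ well-formation.  A context entry is `none` (absent) or a marker:
linear `x`, nonlinear `!x`, or nonlinear `§x`. -/

inductive SMark : Type
  | lin : SMark
  | bang : SMark
  | para : SMark
deriving DecidableEq

abbrev Ctx := List (Option SMark)

/-- Contexts made only of §-marked (or absent) variables: these admit
weakening. -/
def ParaOnly (Γ : Ctx) : Prop := ∀ e ∈ Γ, e = none ∨ e = some .para

/-- Splitting one context entry between the two premises of a binary rule: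
linear and !-variables go to exactly one premise, §-variables may be shared
(implicit contraction). -/
inductive SplitE : Option SMark → Option SMark → Option SMark → Prop
  | none : SplitE none none none
  | linL : SplitE (some .lin) (some .lin) none
  | linR : SplitE (some .lin) none (some .lin)
  | bangL : SplitE (some .bang) (some .bang) none
  | bangR : SplitE (some .bang) none (some .bang)
  | paraL : SplitE (some .para) (some .para) none
  | paraR : SplitE (some .para) none (some .para)
  | paraB : SplitE (some .para) (some .para) (some .para)

inductive Split : Ctx → Ctx → Ctx → Prop
  | nil : Split [] [] []
  | cons : SplitE e e₁ e₂ → Split Γ Γ₁ Γ₂ → Split (e :: Γ) (e₁ :: Γ₁) (e₂ :: Γ₂)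

/-- Entry-wise relation between the context of `V` and the context of `!V`:
linear variables become !-marked ones, and weakening by §-variables is
allowed.  §- and !-variables may not appear inside a !-box. -/
inductive BangE : Option SMark → Option SMark → Prop
  | lin : BangE (some .lin) (some .bang)
  | none : BangE none none
  | para : BangE none (some .para)

inductive BangCtx : Ctx → Ctx → Prop
  | nil : BangCtx [] []
  | cons : BangE e e' → BangCtx Γ Γ' → BangCtx (e :: Γ) (e' :: Γ')

mutual
inductive WfV : Ctx → Val → Prop
  | star : ParaOnly Γ → WfV Γ .star
  | varLin : ParaOnly Γ → WfV (some .lin :: Γ) (.var 0)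
  | varPara : ParaOnly Γ → WfV (some .para :: Γ) (.var 0)
  | varThere : (e = none ∨ e = some SMark.para) → WfV Γ (.var x) →
      WfV (e :: Γ) (.var (x + 1))
  | lam : WfP (some .lin :: Γ) P → WfV Γ (.lam P)
  | blamBang : WfP (some .bang :: Γ) P → WfV Γ (.blam P)
  | blamPara : WfP (some .para :: Γ) P → WfV Γ (.blam P)
  | bang : BangCtx Γ Δ → WfV Γ V → WfV Δ (.bang V)
inductive WfP : Ctx → Proc → Prop
  | nil : ParaOnly Γ → WfP Γ .nil
  | par : Split Γ Γ₁ Γ₂ → WfP Γ₁ P → WfP Γ₂ Q → WfP Γ (.par P Q)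
  | inp : WfP (some .lin :: Γ) P → WfP Γ (.inp a P)
  | binpBang : WfP (some .bang :: Γ) P → WfP Γ (.binp a P)
  | binpPara : WfP (some .para :: Γ) P → WfP Γ (.binp a P)
  | out : Split Γ Γ₁ Γ₂ → WfV Γ₁ V → WfP Γ₂ P → WfP Γ (.out a V P)
  | nu : WfP Γ P → WfP Γ (.nu a P)
  | app : Split Γ Γ₁ Γ₂ → WfV Γ₁ V → WfV Γ₂ W → WfP Γ (.app V W)
end

/-! Measures: size, box depth, free occurrences, duplicability factor,
parametrized weight, weight. -/

mutual
def sizeV : Val → ℕ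
  | .star => 1
  | .var _ => 1
  | .lam P => sizeP P + 1
  | .blam P => sizeP P + 1
  | .bang V => sizeV V + 1
def sizeP : Proc → ℕ
  | .nil => 1
  | .par P Q => sizeP P + sizeP Q + 1
  | .inp _ P => sizeP P + 1
  | .binp _ P => sizeP P + 1
  | .out _ V P => sizeV V + sizeP P + 1
  | .nu _ P => sizeP P + 1
  | .app V W => sizeV V + sizeV W + 1
end

mutual
def bdV : Val → ℕ
  | .star => 0
  | .var _ => 0
  | .lam P => bdP P
  | .blam P => bdP P
  | .bang V => bdV V + 1
def bdP : Proc → ℕ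
  | .nil => 0
  | .par P Q => max (bdP P) (bdP Q)
  | .inp _ P => bdP P
  | .binp _ P => bdP P
  | .out _ V P => max (bdV V) (bdP P)
  | .nu _ P => bdP P
  | .app V W => max (bdV V) (bdV W)
end

-- Number of free occurrences of the variable (de Bruijn index) `k`.
mutual
def foV (k : ℕ) : Val → ℕ
  | .star => 0
  | .var x => if x = k then 1 else 0
  | .lam P => foP (k + 1) P
  | .blam P => foP (k + 1) P
  | .bang V => foV k V
def foP (k : ℕ) : Proc → ℕ
  | .nil => 0
  | .par P Q => foP k P + foP k Q
  | .inp _ P => foP (k + 1) P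
  | .binp _ P => foP (k + 1) P
  | .out _ V P => foV k V + foP k P
  | .nu _ P => foP k P
  | .app V W => foV k V + foV k W
end

-- Duplicability factor.
mutual
def dV : Val → ℕ
  | .star => 1
  | .var _ => 1
  | .lam P => max (dP P) (foP 0 P)
  | .blam P => max (dP P) (foP 0 P)
  | .bang V => dV V
def dP : Proc → ℕ
  | .nil => 1
  | .par P Q => max (dP P) (dP Q)
  | .inp _ P => max (dP P) (foP 0 P)
  | .binp _ P => max (dP P) (foP 0 P)
  | .out _ V P => max (dV V) (dP P)
  | .nu _ P => dP P
  | .app V W => max (dV V) (dV W)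
end

-- `n`-parametrized weight.
mutual
def wV (n : ℕ) : Val → ℕ
  | .star => 1
  | .var _ => 1
  | .lam P => wP n P
  | .blam P => wP n P
  | .bang V => n * wV n V + 1
def wP (n : ℕ) : Proc → ℕ
  | .nil => 1
  | .par P Q => wP n P + wP n Q + 1
  | .inp _ P => wP n P + 1
  | .binp _ P => wP n P + 1
  | .out _ V P => wV n V + wP n P
  | .nu _ P => wP n P
  | .app V W => wV n V + wV n W + 1
end

/-- The weight of a process. -/
def weightP (P : Proc) : ℕ := wP (dP P) P
/-- The weight of a value. -/
def weightV (V : Val) : ℕ := wV (dV V) V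


/-- `DELTA_! = λ!y.(a(!x).((x (!⋆)) | a⟨!x⟩.0))`, with channel `a = 0`;
the variable `y` (de Bruijn index `1` inside the input body) does not occur,
and `x` is the de Bruijn index `0` inside the input body. -/
def DELTABang : Val :=
  .blam (.binp 0 (.par (.app (.var 0) (.bang .star))
                       (.out 0 (.bang (.var 0)) .nil)))

/-- `OMEGA_! = νa.((DELTA_! (!⋆)) | a⟨!DELTA_!⟩.0)`. -/
def OMEGABang : Proc :=
  .nu 0 (.par (.app DELTABang (.bang .star))
              (.out 0 (.bang DELTABang) .nil))

theorem eq_bang_of_wfV_bang_var_zero {m : Option SMark} {Γ : Ctx}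
    (h : WfV (m :: Γ) (.bang (.var 0))) : m = some .bang := by
  cases h with
  | bang hb hv =>
    cases hb with
    | cons he _ =>
      cases he with
      | lin => rfl
      | none => cases hv
      | para => cases hv

/-- The body of the input in `DELTA_!` is not well formed, whatever the marker of `x`. -/
theorem not_wfP_body (m : Option SMark) (Γ : Ctx) :
    ¬ WfP (m :: Γ) (.par (.app (.var 0) (.bang .star))
      (.out 0 (.bang (.var 0)) .nil)) := by
  intro h
  cases h with
  | par hs happ hout =>
    cases hs with
    | cons he _ =>
      cases hout with
      | out hs₂ hV _ =>
        cases hs₂ with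
        | cons he₂ _ =>
          -- The boxed occurrence makes the right-hand share of `x` equal to `!x`.
          obtain rfl := eq_bang_of_wfV_bang_var_zero hV
          cases he₂
          -- A `!`-variable is not shared, so nothing is left for the occurrence at depth 0.
          cases he
          cases happ with
          | app hs₁ hW _ =>
            cases hs₁ with
            | cons he₁ _ =>
              cases he₁
              cases hW

theorem not_wfV_deltaBang (Γ : Ctx) : ¬ WfV Γ DELTABang := by
  intro h
  cases h with
  | blamBang h | blamPara h =>
    cases h with
    | binpBang h | binpPara h => exact not_wfP_body _ _ h

/-- The nonterminating linear process `OMEGA_!` is not a soft process: no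
context makes it well formed in SHOπ. -/
theorem omega_bang_not_soft : ¬ ∃ Γ : Ctx, WfP Γ OMEGABang := by
  rintro ⟨Γ, h⟩
  cases h with
  | nu h =>
    cases h with
    | par _ happ _ =>
      cases happ with
      | app _ hV _ => exact not_wfV_deltaBang _ hV
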